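/- For every real x and every real t, ∑_{n=0}^∞ (t^n/n!) h_n(x) = e^{x t} · ₕe(t), i.e. the exponential generating function of the harmonic polynomials is e^{xt} times the harmonic based exponential function evaluated at t. -/

import Mathlib

open Real MeasureTheory

/-- The `n`-th harmonic number `h_n = ∑_{r=1}^n 1/r`. -/
noncomputable def harm (n : ℕ) : ℝ := ∑ r ∈ Finset.range n, 1 / (r + 1 : ℝ)

/-- The harmonic based exponential function `ₕe(x) = 1 + ∑_{n=1}^∞ h_n x^n / n!`. -/
noncomputable def he (x : ℝ) : ℝ :=
  1 + ∑' n : ℕ, harm (n + 1) * x ^ (n + 1) / (Nat.factorial (n + 1) : ℝ)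

/-- The `n`-th harmonic polynomial `h_n(x) = x^n + ∑_{s=1}^n C(n,s) h_s x^{n-s}`. -/
noncomputable def hp (n : ℕ) (x : ℝ) : ℝ :=
  x ^ n + ∑ s ∈ Finset.Icc 1 n, (n.choose s : ℝ) * harm s * x ^ (n - s)

/-!
With the umbral convention `ĥ ^ 0 = 1`, the polynomial `h_n(x) = (ĥ + x) ^ n` is the `n`-th binomial
convolution of the sequences `ĥ ^ n` and `x ^ n`. Since `n.choose k / n! = 1 / (k! * (n - k)!)`, the
exponential generating function of a binomial convolution is the Cauchy product of those of its
factors, here `ₕe(t)` and `e^{xt}`. The former converges absolutely because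
`h_n ≤ n = O(2 ^ n)`.
-/

open Finset Filter Asymptotics
open scoped Nat

/-- The binomial convolution of two sequences, whose exponential generating function is the product
of theirs. In umbral notation the term of index `n` is `(â + b̂) ^ n`. -/
def binomialConvolution {R : Type*} [Semiring R] (a b : ℕ → R) (n : ℕ) : R :=
  ∑ k ∈ range (n + 1), (n.choose k : R) * a k * b (n - k)

lemma pow_div_factorial_mul_binomialConvolution {K : Type*} [Field K] [CharZero K]
    (a b : ℕ → K) (t : K) (n : ℕ) :
    t ^ n / n ! * binomialConvolution a b n =
      ∑ k ∈ range (n + 1), (t ^ k / k ! * a k) * (t ^ (n - k) / (n - k)! * b (n - k)) := by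
  rw [binomialConvolution, mul_sum]
  refine sum_congr rfl fun k hk => ?_
  have hkn : k ≤ n := mem_range_succ_iff.mp hk
  have hn : (n ! : K) ≠ 0 := mod_cast n.factorial_ne_zero
  rw [Nat.cast_choose K hkn, ← pow_mul_pow_sub t hkn]
  field_simp

theorem hasSum_pow_div_factorial_mul_binomialConvolution {K : Type*} [NormedField K] [CharZero K]
    [CompleteSpace K] {a b : ℕ → K} {t : K} (ha : Summable fun n => ‖t ^ n / n ! * a n‖)
    (hb : Summable fun n => ‖t ^ n / n ! * b n‖) :
    HasSum (fun n => t ^ n / n ! * binomialConvolution a b n)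
      ((∑' n, t ^ n / n ! * a n) * ∑' n, t ^ n / n ! * b n) := by
  simpa only [pow_div_factorial_mul_binomialConvolution] using
    hasSum_sum_range_mul_of_summable_norm ha hb

section Exponential

variable {K : Type*} [NormedField K] [NormedAlgebra ℚ K]

lemma summable_norm_pow_div_factorial_mul_of_isBigO {a : ℕ → K} {r : K}
    (ha : a =O[atTop] fun n => r ^ n) (t : K) : Summable fun n => ‖t ^ n / n ! * a n‖ := by
  have hbound : (fun n => t ^ n / n ! * a n) =O[atTop] fun n => (t * r) ^ n / (n ! : K) := by
    simpa only [mul_pow, mul_div_right_comm] using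
      (isBigO_refl (fun n => t ^ n / (n ! : K)) atTop).mul ha
  exact summable_of_isBigO_nat (NormedSpace.norm_expSeries_div_summable (t * r))
    hbound.norm_norm

theorem hasSum_pow_div_factorial_mul_binomialConvolution_pow [CompleteSpace K] {a : ℕ → K}
    {t : K} (ha : Summable fun n => ‖t ^ n / n ! * a n‖) (x : K) :
    HasSum (fun n => t ^ n / n ! * binomialConvolution a (x ^ ·) n)
      (NormedSpace.exp (x * t) * ∑' n, t ^ n / n ! * a n) := by
  have : CharZero K := algebraRat.charZero K
  have hterm (n : ℕ) : t ^ n / n ! * x ^ n = (x * t) ^ n / n ! := by ring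
  have hpow : Summable fun n => ‖t ^ n / n ! * x ^ n‖ := by
    simpa only [hterm] using NormedSpace.norm_expSeries_div_summable (x * t)
  have hexp : ∑' n, t ^ n / n ! * x ^ n = NormedSpace.exp (x * t) := by
    simpa only [hterm] using (NormedSpace.expSeries_div_hasSum_exp (x * t)).tsum_eq
  rw [mul_comm, ← hexp]
  exact hasSum_pow_div_factorial_mul_binomialConvolution ha hpow

end Exponential

lemma harm_nonneg (n : ℕ) : 0 ≤ harm n :=
  sum_nonneg fun _ _ => by positivity

lemma harm_le_self (n : ℕ) : harm n ≤ n := by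
  have hterm (r : ℕ) : 1 / (r + 1 : ℝ) ≤ 1 :=
    div_le_one_of_le₀ (le_add_of_nonneg_left r.cast_nonneg) (by positivity)
  simpa [harm] using sum_le_card_nsmul (range n) _ 1 fun r _ => hterm r

/-- The umbral powers `ĥ ^ n` of the harmonic sequence: `harm n` for `n ≠ 0`, but `ĥ ^ 0 = 1`
although `harm 0 = 0`. -/
noncomputable def harmUmbral : ℕ → ℝ
  | 0 => 1
  | n + 1 => harm (n + 1)

lemma harmUmbral_of_ne_zero {n : ℕ} (hn : n ≠ 0) : harmUmbral n = harm n := by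
  obtain ⟨m, rfl⟩ := Nat.exists_eq_succ_of_ne_zero hn
  rfl

lemma harmUmbral_isBigO_two_pow : harmUmbral =O[atTop] fun n => (2 : ℝ) ^ n := by
  have hharm : harm =O[atTop] fun n => (n : ℝ) := .of_norm_le fun n => by
    simpa only [Real.norm_of_nonneg (harm_nonneg n)] using harm_le_self n
  have heq : harmUmbral =ᶠ[atTop] harm :=
    (eventually_ne_atTop 0).mono fun _ => harmUmbral_of_ne_zero
  exact heq.trans_isBigO (hharm.trans (isLittleO_coe_const_pow_of_one_lt one_lt_two).isBigO)

lemma summable_norm_pow_div_factorial_mul_harmUmbral (t : ℝ) :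
    Summable fun n => ‖t ^ n / n ! * harmUmbral n‖ :=
  summable_norm_pow_div_factorial_mul_of_isBigO harmUmbral_isBigO_two_pow t

lemma he_eq_tsum_harmUmbral (t : ℝ) : he t = ∑' n, t ^ n / n ! * harmUmbral n := by
  rw [(summable_norm_pow_div_factorial_mul_harmUmbral t).of_norm.tsum_eq_zero_add]
  simp [he, harmUmbral, mul_comm, mul_div_assoc]

lemma hp_eq_binomialConvolution (n : ℕ) (x : ℝ) :
    hp n x = binomialConvolution harmUmbral (x ^ ·) n := by
  rw [hp, binomialConvolution, Nat.range_succ_eq_Icc_zero, ← add_sum_Ioc_eq_sum_Icc n.zero_le]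
  congr 1
  · simp [harmUmbral]
  · refine sum_congr rfl fun s hs => ?_
    rw [harmUmbral_of_ne_zero (Nat.one_le_iff_ne_zero.mp (mem_Icc.mp hs).1)]

theorem hasSum_pow_div_factorial_mul_hp (x t : ℝ) :
    HasSum (fun n => t ^ n / n ! * hp n x) (Real.exp (x * t) * he t) := by
  simpa only [hp_eq_binomialConvolution, he_eq_tsum_harmUmbral, Real.exp_eq_exp_ℝ] using
    hasSum_pow_div_factorial_mul_binomialConvolution_pow
      (summable_norm_pow_div_factorial_mul_harmUmbral t) x

/-- `∑_{n=0}^∞ (t^n/n!) h_n(x) = e^{xt} ₕe(t)`. -/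
theorem hp_generating_function (x t : ℝ) :
    (∑' n : ℕ, t ^ n / (Nat.factorial n : ℝ) * hp n x) = Real.exp (x * t) * he t :=
  (hasSum_pow_div_factorial_mul_hp x t).tsum_eq
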